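/- Let A be a finite abelian group, G a finite group, α : G → Aut(A) an action, and K = A ⋊_α G. Then every irreducible complex character χ of K is of the form χ = Ind_{K(σ)}^K (σ⊙χ_τ) for some character σ ∈ Â and some irreducible complex character χ_τ of the stabilizer G(σ), where K(σ) = A ⋊_α G(σ) and (σ⊙χ_τ)(a, s) = σ(a)·χ_τ(s). (This is the group case of Proposition 4.1, the Mackey machine for semidirect products with abelian normal part.) -/

import Mathlib

namespace Stmt15

open scoped Classical in
/-- The function induced from a subgroup `H` of a finite group `K`:
`(Ind_H^K f)(k) = (1/|H|) · Σ_{t ∈ K, t k t⁻¹ ∈ H} f (t k t⁻¹)`. -/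
noncomputable def ind {K : Type*} [Group K] [Fintype K] (H : Subgroup K) (f : K → ℂ) :
    K → ℂ :=
  fun k => (1 / (Nat.card H : ℂ)) * ∑ t : K, if t * k * t⁻¹ ∈ H then f (t * k * t⁻¹) else 0

instance {A G : Type} [Group A] [Fintype A] [Group G] [Fintype G] {α : G →* MulAut A} :
    Fintype (A ⋊[α] G) :=
  Fintype.ofEquiv (A × G)
    { toFun := fun p => ⟨p.1, p.2⟩
      invFun := fun x => (x.left, x.right)
      left_inv := fun _ => rfl
      right_inv := fun _ => rfl }

/-- The underlying representation of a simple object of `FDRep k G` is irreducible. -/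
theorem isIrreducible_of_simple {k : Type} [Field k] {G : Type} [Group G] (V : FDRep k G)
    [CategoryTheory.Simple V] : Representation.IsIrreducible V.ρ := by
  have hnt : Nontrivial V := by
    by_contra h
    rw [not_nontrivial_iff_subsingleton] at h
    refine CategoryTheory.Simple.not_isZero V ?_
    rw [CategoryTheory.Limits.IsZero.iff_id_eq_zero]
    ext x
    exact Subsingleton.elim (α := V) _ _
  refine { exists_pair_ne := ⟨⊥, ⊤, fun h => ?_⟩, eq_bot_or_eq_top := fun U => ?_ }
  · have := congrArg Subrepresentation.toSubmodule h
    exact bot_ne_top (α := Submodule k V) this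
  · let f : FDRep.of U.toRepresentation ⟶ V :=
      { hom := FGModuleCat.ofHom U.toSubmodule.subtype
        comm := fun g => rfl }
    have hf : CategoryTheory.Mono f := by
      refine ⟨fun a b hab => ?_⟩
      ext x
      have := congrArg (fun h => h.hom.hom.hom x) hab
      exact this
    by_cases h0 : f = 0
    · left
      apply Subrepresentation.toSubmodule_injective
      refine (Submodule.eq_bot_iff _).2 fun x hx => ?_
      exact congrArg (fun h => h.hom.hom.hom (⟨x, hx⟩ : U.toSubmodule)) h0
    · right
      have hi := (CategoryTheory.Simple.mono_isIso_iff_nonzero f).2 h0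
      apply Subrepresentation.toSubmodule_injective
      refine (Submodule.eq_top_iff').2 fun x => ?_
      have h1 := congrArg (fun h => h.hom.hom.hom x) (CategoryTheory.IsIso.inv_hom_id f)
      change ((((CategoryTheory.inv f).hom.hom.hom x : U.toSubmodule)) : V) = x at h1
      rw [← h1]
      exact Subtype.property _

/-- An irreducible complex representation of a finite group is simple in `FDRep ℂ G`. -/
theorem simple_of_isIrreducible {G : Type} [Group G] [Fintype G] {V : Type} [AddCommGroup V]
    [Module ℂ V] [FiniteDimensional ℂ V] (ρ : Representation ℂ G V) [ρ.IsIrreducible] :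
    CategoryTheory.Simple (FDRep.of ρ) := by
  rw [FDRep.simple_iff_char_is_norm_one]
  have hc : (Nat.card G : ℂ) ≠ 0 := Nat.cast_ne_zero.2 Nat.card_pos.ne'
  have := invertibleOfNonzero hc
  have h := Representation.char_orthonormal ρ ρ
  rw [if_pos ⟨Representation.Equiv.refl ρ⟩, inv_mul_eq_one₀ hc] at h
  exact h.symm

section WeightSpace

variable {A V : Type} [CommGroup A] [AddCommGroup V] [Module ℂ V]

/-- The `σ`-isotypic subspace of a representation of an abelian group. -/
def weightSpace (ρ : Representation ℂ A V) (σ : A →* ℂˣ) : Submodule ℂ V where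
  carrier := {v | ∀ a, ρ a v = (σ a : ℂ) • v}
  add_mem' hv hw a := by rw [map_add, hv a, hw a, smul_add]
  zero_mem' a := by simp
  smul_mem' c v hv a := by rw [map_smul, hv a, smul_comm]

theorem mem_weightSpace {ρ : Representation ℂ A V} {σ : A →* ℂˣ} {v : V} :
    v ∈ weightSpace ρ σ ↔ ∀ a, ρ a v = (σ a : ℂ) • v := Iff.rfl

theorem eq_zero_of_mem_weightSpace {ρ : Representation ℂ A V} {σ τ : A →* ℂˣ} (h : σ ≠ τ) {v : V}
    (hσ : v ∈ weightSpace ρ σ) (hτ : v ∈ weightSpace ρ τ) : v = 0 := by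
  obtain ⟨a, ha⟩ := DFunLike.ne_iff.1 h
  have h1 : ((σ a : ℂ) - τ a) • v = 0 := by rw [sub_smul, ← hσ a, ← hτ a, sub_self]
  refine (smul_eq_zero.1 h1).resolve_left fun h2 => ha ?_
  exact Units.ext (sub_eq_zero.1 h2)

variable [Fintype A]

/-- The projection `(1/|A|) Σ_a σ(a)⁻¹ ρ(a)` onto the `σ`-isotypic subspace. -/
noncomputable def weightProj (ρ : Representation ℂ A V) (σ : A →* ℂˣ) : V →ₗ[ℂ] V :=
  (Fintype.card A : ℂ)⁻¹ • ∑ a : A, ((σ a⁻¹ : ℂˣ) : ℂ) • ρ a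

theorem weightProj_apply (ρ : Representation ℂ A V) (σ : A →* ℂˣ) (v : V) :
    weightProj ρ σ v = (Fintype.card A : ℂ)⁻¹ • ∑ a : A, ((σ a⁻¹ : ℂˣ) : ℂ) • ρ a v := by
  simp [weightProj, LinearMap.sum_apply]

theorem weightProj_mem (ρ : Representation ℂ A V) (σ : A →* ℂˣ) (v : V) :
    weightProj ρ σ v ∈ weightSpace ρ σ := by
  intro b
  rw [weightProj_apply, map_smul, smul_comm (σ b : ℂ), map_sum, Finset.smul_sum (r := (σ b : ℂ))]
  refine congrArg (fun w : V => (Fintype.card A : ℂ)⁻¹ • w) ?_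
  refine Fintype.sum_equiv (Equiv.mulLeft b) _ _ fun a => ?_
  rw [map_smul, ← Module.End.mul_apply, ← map_mul, Equiv.coe_mulLeft, smul_smul, ← Units.val_mul,
    ← map_mul, mul_inv_rev, mul_comm a⁻¹, mul_inv_cancel_left]

theorem weightProj_of_mem {ρ : Representation ℂ A V} {σ : A →* ℂˣ} {v : V}
    (hv : v ∈ weightSpace ρ σ) : weightProj ρ σ v = v := by
  have h : ∀ a : A, ((σ a⁻¹ : ℂˣ) : ℂ) • ρ a v = v := fun a => by
    rw [hv a, smul_smul, ← Units.val_mul, ← map_mul, inv_mul_cancel, map_one, Units.val_one,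
      one_smul]
  simp only [weightProj_apply, h]
  rw [Finset.sum_const, Finset.card_univ, ← Nat.cast_smul_eq_nsmul ℂ, smul_smul, inv_mul_cancel₀, one_smul]
  exact Nat.cast_ne_zero.2 Fintype.card_ne_zero

theorem weightProj_of_mem_of_ne {ρ : Representation ℂ A V} {σ τ : A →* ℂˣ} (h : τ ≠ σ) {v : V}
    (hv : v ∈ weightSpace ρ τ) : weightProj ρ σ v = 0 := by
  refine eq_zero_of_mem_weightSpace h (fun b => ?_) (weightProj_mem ρ σ v)
  simp only [weightProj_apply, map_smul, map_sum, hv _]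
  rw [smul_comm]
  simp only [Finset.smul_sum]
  congr 2
  ext a
  rw [smul_comm, smul_comm (τ b : ℂ) ((σ a⁻¹ : ℂˣ) : ℂ), smul_comm (τ b : ℂ)]
  exact smul_comm _ _ _

/-- A nonzero complex representation of a finite abelian group has a nonzero isotypic subspace. -/
theorem exists_weightSpace_ne_bot [Nontrivial V] (ρ : Representation ℂ A V) :
    ∃ σ, weightSpace ρ σ ≠ ⊥ := by
  by_contra! h
  obtain ⟨v, hv⟩ := exists_ne (0 : V)
  have := Fintype.ofFinite (A →* ℂˣ)
  have h1 : ∀ σ : A →* ℂˣ, ∑ a : A, ((σ a⁻¹ : ℂˣ) : ℂ) • ρ a v = 0 := fun σ => by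
    have h2 := weightProj_mem ρ σ v
    rw [h σ, Submodule.mem_bot, weightProj_apply] at h2
    exact (smul_eq_zero.1 h2).resolve_left (inv_ne_zero (Nat.cast_ne_zero.2 Fintype.card_ne_zero))
  have h3 : ∑ σ : A →* ℂˣ, ∑ a : A, ((σ a⁻¹ : ℂˣ) : ℂ) • ρ a v = 0 :=
    Finset.sum_eq_zero fun σ _ => h1 σ
  rw [Finset.sum_comm, Finset.sum_eq_single 1] at h3
  · simp only [inv_one, map_one, Units.val_one, one_smul, Module.End.one_apply,
      Finset.sum_const, Finset.card_univ] at h3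
    rw [← Nat.cast_smul_eq_nsmul ℂ] at h3
    exact hv ((smul_eq_zero.1 h3).resolve_left (Nat.cast_ne_zero.2 Fintype.card_ne_zero))
  · intro a _ ha
    rw [← Finset.sum_smul]
    let f : (A →* ℂˣ) →* ℂ := (Units.coeHom ℂ).comp (MonoidHom.eval a⁻¹)
    have hf : f ≠ 1 := by
      obtain ⟨φ, hφ⟩ := CommGroup.exists_apply_ne_one_of_hasEnoughRootsOfUnity A ℂ
        (inv_ne_one.2 ha)
      intro hf
      exact hφ (Units.ext (DFunLike.congr_fun hf φ))
    have := sum_hom_units_eq_zero f hf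
    exact (congrArg (· • ρ a v) this).trans (zero_smul _ _)
  · simp

end WeightSpace

section Mackey

variable {A G : Type} [CommGroup A] [Group G] {α : G →* MulAut A}

/-- The stabilizer of the character `σ` under the action of `G` on characters of `A`. -/
def charStabilizer (α : G →* MulAut A) (σ : A →* ℂˣ) : Subgroup G where
  carrier := {g | ∀ b, σ (α g⁻¹ b) = σ b}
  one_mem' b := by simp
  mul_mem' {g h} hg hh b := by
    rw [mul_inv_rev, map_mul, MulAut.mul_apply, hh, hg]
  inv_mem' {g} hg b := by
    rw [← hg, ← MulAut.mul_apply, ← map_mul, inv_inv, inv_mul_cancel, map_one, MulAut.one_apply]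

theorem mem_charStabilizer {σ : A →* ℂˣ} {g : G} :
    g ∈ charStabilizer α σ ↔ ∀ b, σ (α g⁻¹ b) = σ b := Iff.rfl

variable {V : Type} [AddCommGroup V] [Module ℂ V] (ρ : Representation ℂ (A ⋊[α] G) V)
  (σ : A →* ℂˣ)

/-- The restriction to the normal subgroup `A` of a representation of `A ⋊[α] G`. -/
abbrev resLeft : Representation ℂ A V := ρ.comp SemidirectProduct.inl

theorem map_mem_weightSpace {v : V} (hv : v ∈ weightSpace (resLeft ρ) σ) (t : A ⋊[α] G) :
    ρ t v ∈ weightSpace (resLeft ρ) (σ.comp (α t.right⁻¹).toMonoidHom) := by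
  intro a
  have h : SemidirectProduct.inl a * t = t * SemidirectProduct.inl (α t.right⁻¹ a) := by
    ext
    · simp [mul_comm]
    · simp
  have h2 := hv (α t.right⁻¹ a)
  simp only [MonoidHom.comp_apply] at h2 ⊢
  rw [← Module.End.mul_apply, ← map_mul, h, map_mul, Module.End.mul_apply, h2, map_smul]
  rfl

theorem map_mem_weightSpace_of_mem {v : V} (hv : v ∈ weightSpace (resLeft ρ) σ) {t : A ⋊[α] G}
    (ht : t.right ∈ charStabilizer α σ) : ρ t v ∈ weightSpace (resLeft ρ) σ := by
  have h : σ.comp (α t.right⁻¹).toMonoidHom = σ := MonoidHom.ext ht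
  simpa only [h] using map_mem_weightSpace ρ σ hv t

/-- The representation of the stabilizer of `σ` on the `σ`-isotypic subspace. -/
noncomputable def stabilizerRep : Representation ℂ (charStabilizer α σ) (weightSpace (resLeft ρ) σ)
    where
  toFun s := (ρ (SemidirectProduct.inr (s : G))).restrict fun v hv =>
    map_mem_weightSpace_of_mem ρ σ hv (by simp)
  map_one' := by ext; simp
  map_mul' s t := by ext; simp

theorem stabilizerRep_apply (s : charStabilizer α σ) (v : weightSpace (resLeft ρ) σ) :
    (stabilizerRep ρ σ s v : V) = ρ (SemidirectProduct.inr (s : G)) v := rfl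

theorem apply_of_mem_weightSpace {v : V} (hv : v ∈ weightSpace (resLeft ρ) σ) (t : A ⋊[α] G)
    (ht : t.right ∈ charStabilizer α σ) :
    ρ t v = (σ t.left : ℂ) • (stabilizerRep ρ σ ⟨t.right, ht⟩ ⟨v, hv⟩ : V) := by
  have h := map_mem_weightSpace_of_mem ρ σ hv (t := SemidirectProduct.inr t.right) (by simpa) t.left
  rw [stabilizerRep_apply, ← h, MonoidHom.comp_apply, ← Module.End.mul_apply, ← map_mul,
    SemidirectProduct.inl_left_mul_inr_right]

variable [Fintype A]

theorem weightProj_map_of_notMem {v : V} (hv : v ∈ weightSpace (resLeft ρ) σ) {t : A ⋊[α] G}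
    (ht : t.right ∉ charStabilizer α σ) : weightProj (resLeft ρ) σ (ρ t v) = 0 :=
  weightProj_of_mem_of_ne (fun h => ht fun b => DFunLike.congr_fun h b)
    (map_mem_weightSpace ρ σ hv t)

theorem trace_mul_weightProj_of_notMem {x : A ⋊[α] G} (hx : x.right ∉ charStabilizer α σ) :
    LinearMap.trace ℂ V (ρ x * weightProj (resLeft ρ) σ) = 0 := by
  have h1 : weightProj (resLeft ρ) σ * weightProj (resLeft ρ) σ = weightProj (resLeft ρ) σ :=
    LinearMap.ext fun v => weightProj_of_mem (weightProj_mem _ σ v)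
  have h2 : weightProj (resLeft ρ) σ * (ρ x * weightProj (resLeft ρ) σ) = 0 :=
    LinearMap.ext fun v => weightProj_map_of_notMem ρ σ (weightProj_mem _ σ v) hx
  rw [← h1, ← mul_assoc, LinearMap.trace_mul_comm, h2, map_zero]

theorem trace_mul_weightProj_of_mem [FiniteDimensional ℂ V] {x : A ⋊[α] G}
    (hx : x.right ∈ charStabilizer α σ) :
    LinearMap.trace ℂ V (ρ x * weightProj (resLeft ρ) σ) =
      (σ x.left : ℂ) * (stabilizerRep ρ σ).character ⟨x.right, hx⟩ := by
  set W := weightSpace (resLeft ρ) σ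
  let p : V →ₗ[ℂ] W := (weightProj (resLeft ρ) σ).codRestrict W (weightProj_mem _ σ)
  let m : W →ₗ[ℂ] W := (σ x.left : ℂ) • stabilizerRep ρ σ ⟨x.right, hx⟩
  have h1 : ρ x * weightProj (resLeft ρ) σ = (W.subtype ∘ₗ m) ∘ₗ p :=
    LinearMap.ext fun v => apply_of_mem_weightSpace ρ σ (weightProj_mem _ σ v) x hx
  have h2 : p ∘ₗ (W.subtype ∘ₗ m) = m :=
    LinearMap.ext fun v => Subtype.ext (weightProj_of_mem (m v).2)
  rw [h1, LinearMap.trace_comp_comm', h2, map_smul, smul_eq_mul]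
  rfl

theorem isIrreducible_stabilizerRep [ρ.IsIrreducible] (hσ : weightSpace (resLeft ρ) σ ≠ ⊥) :
    (stabilizerRep ρ σ).IsIrreducible := by
  refine { exists_pair_ne := ⟨⊥, ⊤, fun h => hσ ?_⟩, eq_bot_or_eq_top := fun U => ?_ }
  · have h1 := congrArg Subrepresentation.toSubmodule h
    change (⊥ : Submodule ℂ (weightSpace (resLeft ρ) σ)) = ⊤ at h1
    refine (Submodule.eq_bot_iff _).2 fun v hv => ?_
    have h2 : (⟨v, hv⟩ : weightSpace (resLeft ρ) σ) ∈ (⊥ : Submodule ℂ _) := h1 ▸ Submodule.mem_top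
    exact congrArg Subtype.val ((Submodule.mem_bot ℂ).1 h2)
  · let U' : Submodule ℂ V := U.toSubmodule.map (weightSpace (resLeft ρ) σ).subtype
    let S : Subrepresentation ρ :=
      { toSubmodule := ⨆ t : A ⋊[α] G, U'.map (ρ t)
        apply_mem_toSubmodule := fun g v hv => by
          have h : (⨆ t : A ⋊[α] G, U'.map (ρ t)) ≤ (⨆ t : A ⋊[α] G, U'.map (ρ t)).comap (ρ g) := by
            refine iSup_le fun t => ?_
            rw [← Submodule.map_le_iff_le_comap, ← Submodule.map_comp, ← Module.End.mul_eq_comp,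
              ← map_mul]
            exact le_iSup (fun t => U'.map (ρ t)) (g * t)
          exact h hv }
    have hUS : U' ≤ S.toSubmodule := by
      refine le_trans (le_of_eq ?_) (le_iSup (fun t => U'.map (ρ t)) 1)
      rw [map_one, Module.End.one_eq_id, Submodule.map_id]
    have hSU : S.toSubmodule ≤ U'.comap (weightProj (resLeft ρ) σ) := by
      refine iSup_le fun t => ?_
      rintro _ ⟨_, ⟨⟨u, hu⟩, huU, rfl⟩, rfl⟩
      rw [Submodule.mem_comap, Submodule.subtype_apply]
      by_cases ht : t.right ∈ charStabilizer α σ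
      · rw [weightProj_of_mem (map_mem_weightSpace_of_mem ρ σ hu ht)]
        rw [apply_of_mem_weightSpace ρ σ hu t ht]
        exact U'.smul_mem _ ⟨_, U.apply_mem_toSubmodule _ huU, rfl⟩
      · rw [weightProj_map_of_notMem ρ σ hu ht]
        exact U'.zero_mem
    rcases eq_bot_or_eq_top S with hS | hS
    · left
      apply Subrepresentation.toSubmodule_injective
      refine (Submodule.eq_bot_iff _).2 fun u hu => Subtype.ext ?_
      have h1 : (u : V) ∈ S.toSubmodule := hUS ⟨u, hu, rfl⟩
      rw [hS] at h1
      exact h1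
    · right
      apply Subrepresentation.toSubmodule_injective
      refine (Submodule.eq_top_iff').2 fun u => ?_
      have h1 : (u : V) ∈ S.toSubmodule := by rw [hS]; exact Submodule.mem_top (R := ℂ)
      obtain ⟨w, hw, hwu⟩ := hSU h1
      rw [weightProj_of_mem u.2] at hwu
      exact Subtype.ext hwu ▸ hw

/-- The conjugates of the projection onto an isotypic subspace of an irreducible representation
add up to a scalar. -/
theorem sum_conj_weightProj [Fintype G] [ρ.IsIrreducible] (hσ : weightSpace (resLeft ρ) σ ≠ ⊥) :
    ∑ t : A ⋊[α] G, ρ t⁻¹ * weightProj (resLeft ρ) σ * ρ t =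
      (Nat.card ((charStabilizer α σ).comap
        (SemidirectProduct.rightHom : A ⋊[α] G →* G)) : ℂ) • 1 := by
  classical
  set H := (charStabilizer α σ).comap (SemidirectProduct.rightHom : A ⋊[α] G →* G)
  set P := ∑ t : A ⋊[α] G, ρ t⁻¹ * weightProj (resLeft ρ) σ * ρ t with hP
  have hcomm : ∀ g, P * ρ g = ρ g * P := fun g => by
    rw [hP, Finset.sum_mul, Finset.mul_sum]
    refine Fintype.sum_equiv (Equiv.mulRight g) _ _ fun t => ?_
    simp only [Equiv.coe_mulRight, mul_inv_rev, map_mul, ← mul_assoc]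
    rw [← map_mul ρ g, mul_inv_cancel, map_one, one_mul]
  let S : Subrepresentation ρ :=
    { toSubmodule := LinearMap.ker (P - (Nat.card H : ℂ) • 1)
      apply_mem_toSubmodule := fun g v hv => by
        rw [LinearMap.mem_ker] at hv ⊢
        have h : (P - (Nat.card H : ℂ) • 1) * ρ g = ρ g * (P - (Nat.card H : ℂ) • 1) := by
          rw [sub_mul, mul_sub, hcomm]; simp
        rw [← Module.End.mul_apply, h, Module.End.mul_apply, hv, map_zero] }
  have hS : weightSpace (resLeft ρ) σ ≤ S.toSubmodule := fun v hv => by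
    have h : ∀ t : A ⋊[α] G, (ρ t⁻¹ * weightProj (resLeft ρ) σ * ρ t) v =
        if t ∈ H then v else 0 := fun t => by
      rw [Module.End.mul_apply, Module.End.mul_apply]
      split_ifs with ht
      · rw [weightProj_of_mem (map_mem_weightSpace_of_mem ρ σ hv ht), ← Module.End.mul_apply,
          ← map_mul, inv_mul_cancel, map_one, Module.End.one_apply]
      · rw [weightProj_map_of_notMem ρ σ hv ht, map_zero]
    change v ∈ LinearMap.ker _
    rw [LinearMap.mem_ker, LinearMap.sub_apply, hP, LinearMap.sum_apply,
      Finset.sum_congr rfl fun t _ => h t, ← Finset.sum_filter, Finset.sum_const,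
      ← Fintype.card_subtype, ← Nat.card_eq_fintype_card, ← Nat.cast_smul_eq_nsmul ℂ]
    exact sub_self _
  rcases eq_bot_or_eq_top S with h | h
  · rw [h] at hS
    exact absurd (le_bot_iff.1 hS) hσ
  · rw [← sub_eq_zero]
    exact LinearMap.ker_eq_top.1 (congrArg Subrepresentation.toSubmodule h)

open scoped Classical in
/-- The character of an irreducible representation is induced from any of its nonzero isotypic
subspaces. -/
theorem character_eq_ind [Fintype G] [FiniteDimensional ℂ V] [ρ.IsIrreducible]
    (hσ : weightSpace (resLeft ρ) σ ≠ ⊥) :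
    ρ.character = ind ((charStabilizer α σ).comap (SemidirectProduct.rightHom : A ⋊[α] G →* G))
      (fun x => if hx : x.right ∈ charStabilizer α σ
        then (σ x.left : ℂ) * (stabilizerRep ρ σ).character ⟨x.right, hx⟩ else 0) := by
  funext k
  set H := (charStabilizer α σ).comap (SemidirectProduct.rightHom : A ⋊[α] G →* G)
  have hH : (Nat.card H : ℂ) ≠ 0 := Nat.cast_ne_zero.2 Nat.card_pos.ne'
  have h1 := congrArg (fun f => LinearMap.trace ℂ V (ρ k * f)) (sum_conj_weightProj ρ σ hσ)
  simp only [Finset.mul_sum, map_sum, mul_smul_comm, mul_one, map_smul, smul_eq_mul] at h1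
  rw [ind, one_div, eq_inv_mul_iff_mul_eq₀ hH]
  refine h1.symm.trans (Finset.sum_congr rfl fun t _ => ?_)
  rw [← mul_assoc, LinearMap.trace_mul_comm, ← mul_assoc, ← mul_assoc, ← map_mul, ← map_mul]
  by_cases ht : t * k * t⁻¹ ∈ H
  · have htr : (t * k * t⁻¹).right ∈ charStabilizer α σ := ht
    rw [if_pos ht, dif_pos htr]
    exact trace_mul_weightProj_of_mem ρ σ htr
  · rw [if_neg ht]
    exact trace_mul_weightProj_of_notMem ρ σ (x := t * k * t⁻¹) ht

end Mackey

open scoped Classical in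
/-- Proposition 4.1, group case (the Mackey machine): every irreducible character of
`K = A ⋊[α] G` is induced from a character `σ⊙χ_τ : (a, s) ↦ σ(a)·χ_τ(s)` of
`K(σ) = A ⋊[α] G(σ)`, where `σ ∈ Â`, `G(σ)` is its stabilizer, and `χ_τ` is an
irreducible character of `G(σ)`. -/
theorem irreducible_char_eq_induced {A G : Type} [CommGroup A] [Fintype A]
    [Group G] [Fintype G] (α : G →* MulAut A)
    (V : FDRep ℂ (A ⋊[α] G)) [CategoryTheory.Simple V] :
    ∃ (σ : A →* ℂˣ) (Gσ : Subgroup G),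
      (∀ g : G, g ∈ Gσ ↔ ∀ b : A, σ ((α g⁻¹) b) = σ b) ∧
      ∃ W : FDRep ℂ ↥Gσ, CategoryTheory.Simple W ∧
        V.character = ind (Gσ.comap (SemidirectProduct.rightHom : A ⋊[α] G →* G))
          (fun x => if hx : x.right ∈ Gσ
            then ((σ x.left : ℂˣ) : ℂ) * W.character ⟨x.right, hx⟩ else 0) := by
  have := isIrreducible_of_simple V
  have : Nontrivial V := by
    by_contra h
    rw [not_nontrivial_iff_subsingleton] at h
    exact bot_ne_top (α := Subrepresentation V.ρ) (by ext x; simp [Subsingleton.elim x 0])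
  obtain ⟨σ, hσ⟩ := exists_weightSpace_ne_bot (resLeft V.ρ)
  have := isIrreducible_stabilizerRep V.ρ σ hσ
  exact ⟨σ, charStabilizer α σ, fun g => Iff.rfl, FDRep.of (stabilizerRep V.ρ σ),
    simple_of_isIrreducible _, character_eq_ind V.ρ σ hσ⟩

end Stmt15
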